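/- Let Λ and K be even nondegenerate lattices and let γ : Λ*/Λ → K*/K be a group isomorphism such that q_K(γ(x)) = −q_Λ(x) in ℚ/2ℤ for all x ∈ Λ*/Λ. Then the lattice Γ := {(v,w) ∈ Λ* ⊕ K* : γ([v]) = [w]}, equipped with the orthogonal direct sum bilinear form ⟨(v,w),(v′,w′)⟩ = ⟨v,v′⟩ + ⟨w,w′⟩, is an even unimodular lattice containing Λ ⊕ K. -/

import Mathlib

/-!
STATEMENT 1: Let Λ and K be even nondegenerate lattices and γ : Λ*/Λ → K*/K a group
isomorphism inverting the discriminant forms (q_K(γ x) = −q_Λ(x) in ℚ/2ℤ, i.e.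
B₁ x x + B₂ y y ∈ 2ℤ on representatives).  Then the glued lattice
Γ = {(v,w) ∈ Λ* ⊕ K* : γ [v] = [w]}, with the orthogonal direct sum form, is an even
unimodular lattice containing Λ ⊕ K.

Λ and K are realised as full lattices in rational quadratic spaces (V, B₁) and (W, B₂).
-/

noncomputable section

variable {V : Type} [AddCommGroup V] [Module ℚ V]

/-- The dual lattice `L* = {x ∈ L⊗ℚ : ⟨x,v⟩ ∈ ℤ for all v ∈ L}`. -/
def dualLat (B : V →ₗ[ℚ] V →ₗ[ℚ] ℚ) (L : Submodule ℤ V) : Submodule ℤ V where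
  carrier := {x | x ∈ Submodule.span ℚ (L : Set V) ∧ ∀ v ∈ L, ∃ n : ℤ, B x v = (n : ℚ)}
  zero_mem' := ⟨Submodule.zero_mem _, fun v _ => ⟨0, by simp⟩⟩
  add_mem' := by
    rintro x y ⟨hx1, hx2⟩ ⟨hy1, hy2⟩
    refine ⟨Submodule.add_mem _ hx1 hy1, fun v hv => ?_⟩
    obtain ⟨m, hm⟩ := hx2 v hv
    obtain ⟨k, hk⟩ := hy2 v hv
    exact ⟨m + k, by rw [map_add, LinearMap.add_apply, hm, hk]; push_cast; ring⟩
  smul_mem' := by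
    rintro c x ⟨hx1, hx2⟩
    constructor
    · rw [← Int.cast_smul_eq_zsmul ℚ]
      exact Submodule.smul_mem _ _ hx1
    · intro v hv
      obtain ⟨m, hm⟩ := hx2 v hv
      refine ⟨c * m, ?_⟩
      rw [← Int.cast_smul_eq_zsmul ℚ, map_smul, LinearMap.smul_apply, smul_eq_mul, hm]
      push_cast; ring

/-- The discriminant group `L*/L` of a lattice `L`. -/
abbrev discGrp (B : V →ₗ[ℚ] V →ₗ[ℚ] ℚ) (L : Submodule ℤ V) :=
  ↥(dualLat B L) ⧸ (L.comap (dualLat B L).subtype)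

/-- The class `[x] ∈ L*/L` of an element `x ∈ L*`. -/
def discMk (B : V →ₗ[ℚ] V →ₗ[ℚ] ℚ) (L : Submodule ℤ V) (x : V) (hx : x ∈ dualLat B L) :
    discGrp B L :=
  Submodule.Quotient.mk ⟨x, hx⟩

variable {W : Type} [AddCommGroup W] [Module ℚ W]

/-- The orthogonal direct sum bilinear form `⟨(v,w),(v',w')⟩ = ⟨v,v'⟩ + ⟨w,w'⟩` on `V × W`. -/
def prodForm (B₁ : V →ₗ[ℚ] V →ₗ[ℚ] ℚ) (B₂ : W →ₗ[ℚ] W →ₗ[ℚ] ℚ) :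
    (V × W) →ₗ[ℚ] (V × W) →ₗ[ℚ] ℚ :=
  LinearMap.mk₂ ℚ (fun z z' => B₁ z.1 z'.1 + B₂ z.2 z'.2)
    (fun x y z => by simp [map_add]; ring)
    (fun c x z => by simp [map_smul]; ring)
    (fun x y z => by simp [map_add]; ring)
    (fun c x y => by simp [map_smul]; ring)

/-- The glued lattice `Γ = {(v,w) ∈ Λ* ⊕ K* : γ [v] = [w]}`. -/
def glued (B₁ : V →ₗ[ℚ] V →ₗ[ℚ] ℚ) (B₂ : W →ₗ[ℚ] W →ₗ[ℚ] ℚ)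
    (L₁ : Submodule ℤ V) (L₂ : Submodule ℤ W)
    (γ : discGrp B₁ L₁ ≃+ discGrp B₂ L₂) : Submodule ℤ (V × W) where
  carrier := {z | ∃ (h₁ : z.1 ∈ dualLat B₁ L₁) (h₂ : z.2 ∈ dualLat B₂ L₂),
      γ (discMk B₁ L₁ z.1 h₁) = discMk B₂ L₂ z.2 h₂}
  zero_mem' := by
    refine ⟨Submodule.zero_mem _, Submodule.zero_mem _, ?_⟩
    have e₁ : discMk B₁ L₁ (0 : V × W).1 (Submodule.zero_mem _) = 0 := by
      show Submodule.Quotient.mk _ = _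
      rw [show (⟨(0 : V × W).1, Submodule.zero_mem _⟩ : ↥(dualLat B₁ L₁)) = 0 from
        Subtype.ext rfl]
      exact Submodule.Quotient.mk_zero _
    have e₂ : discMk B₂ L₂ (0 : V × W).2 (Submodule.zero_mem _) = 0 := by
      show Submodule.Quotient.mk _ = _
      rw [show (⟨(0 : V × W).2, Submodule.zero_mem _⟩ : ↥(dualLat B₂ L₂)) = 0 from
        Subtype.ext rfl]
      exact Submodule.Quotient.mk_zero _
    rw [e₁, e₂, map_zero]
  add_mem' := by
    rintro x y ⟨hx1, hx2, hxγ⟩ ⟨hy1, hy2, hyγ⟩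
    refine ⟨Submodule.add_mem _ hx1 hy1, Submodule.add_mem _ hx2 hy2, ?_⟩
    have e₁ : discMk B₁ L₁ (x + y).1 (Submodule.add_mem _ hx1 hy1) =
        discMk B₁ L₁ x.1 hx1 + discMk B₁ L₁ y.1 hy1 := by
      show Submodule.Quotient.mk _ = _
      rw [show (⟨(x + y).1, _⟩ : ↥(dualLat B₁ L₁)) = ⟨x.1, hx1⟩ + ⟨y.1, hy1⟩ from
        Subtype.ext rfl]
      exact Submodule.Quotient.mk_add _
    have e₂ : discMk B₂ L₂ (x + y).2 (Submodule.add_mem _ hx2 hy2) =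
        discMk B₂ L₂ x.2 hx2 + discMk B₂ L₂ y.2 hy2 := by
      show Submodule.Quotient.mk _ = _
      rw [show (⟨(x + y).2, _⟩ : ↥(dualLat B₂ L₂)) = ⟨x.2, hx2⟩ + ⟨y.2, hy2⟩ from
        Subtype.ext rfl]
      exact Submodule.Quotient.mk_add _
    rw [e₁, e₂, map_add, hxγ, hyγ]
  smul_mem' := by
    rintro c x ⟨hx1, hx2, hxγ⟩
    refine ⟨Submodule.smul_mem _ _ hx1, Submodule.smul_mem _ _ hx2, ?_⟩
    have e₁ : discMk B₁ L₁ (c • x).1 (Submodule.smul_mem _ _ hx1) =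
        c • discMk B₁ L₁ x.1 hx1 := by
      show Submodule.Quotient.mk _ = _
      rw [show (⟨(c • x).1, _⟩ : ↥(dualLat B₁ L₁)) = c • (⟨x.1, hx1⟩ : ↥(dualLat B₁ L₁)) from
        Subtype.ext rfl]
      exact Submodule.Quotient.mk_smul _ _ _
    have e₂ : discMk B₂ L₂ (c • x).2 (Submodule.smul_mem _ _ hx2) =
        c • discMk B₂ L₂ x.2 hx2 := by
      show Submodule.Quotient.mk _ = _
      rw [show (⟨(c • x).2, _⟩ : ↥(dualLat B₂ L₂)) = c • (⟨x.2, hx2⟩ : ↥(dualLat B₂ L₂)) from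
        Subtype.ext rfl]
      exact Submodule.Quotient.mk_smul _ _ _
    rw [e₁, e₂, map_zsmul, hxγ]

/-!
Since `Γ` is even, polarization makes it integral, i.e. `Γ ≤ Γ*`. It lies between `Λ ⊕ K` and
`Λ* ⊕ K*`, and it projects onto both `Λ*` and `K*` because `γ` is bijective. If `(a, b) ∈ Γ*`, then
`a ∈ Λ*`, so some `(a, b')` lies in `Γ`; the difference `(0, b - b')` lies in `Γ*`, and pairing it
with `Γ`, which covers all of `K*`, shows that `b - b' ∈ K** = K`. Hence `(a, b) ∈ Γ`.
-/

open Submodule LinearMap.BilinForm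

section CommRing

variable {R A E E' : Type*} [CommRing R] [CommRing A] [Algebra R A]
  [AddCommGroup E] [Module R E] [Module A E] [IsScalarTower R A E]
  [AddCommGroup E'] [Module R E'] [Module A E'] [IsScalarTower R A E']

theorem isLattice_prod (L : Submodule R E) (M : Submodule R E') [IsLattice A L] [IsLattice A M] :
    IsLattice A (L.prod M) where
  fg := IsLattice.fg.prod IsLattice.fg
  span_eq_top := by
    rw [prod_coe, span_prod_eq A L.zero_mem M.zero_mem, IsLattice.span_eq_top,
      IsLattice.span_eq_top, prod_top]

theorem isLattice_of_le_of_le [IsNoetherianRing R] {L M N : Submodule R E} [IsLattice A L]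
    [IsLattice A N] (hLM : L ≤ M) (hMN : M ≤ N) : IsLattice A M :=
  IsLattice.of_le_of_isLattice_of_fg A hLM (IsLattice.fg.of_le hMN)

end CommRing

section FractionField

variable {R F E : Type*} [CommRing R] [IsDomain R] [IsPrincipalIdealRing R] [Field F]
  [Algebra R F] [IsFractionRing R F] [AddCommGroup E] [Module R E] [Module F E]
  [IsScalarTower R F E]

theorem exists_basis_span_eq_of_isLattice (L : Submodule R E) [IsLattice F L] :
    ∃ (n : ℕ) (b : Module.Basis (Fin n) F E), span R (Set.range b) = L := by
  have := IsLattice.free F L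
  let c := Module.finBasis R L
  refine ⟨_, c.extendOfIsLattice F, ?_⟩
  have hrange : Set.range (c.extendOfIsLattice F) = L.subtype '' Set.range c := by
    ext; simp
  rw [hrange, span_image, c.span_eq, map_subtype_top]

variable {B : LinearMap.BilinForm F E}

theorem isLattice_dualSubmodule (hB : B.Nondegenerate) (L : Submodule R E) [IsLattice F L] :
    IsLattice F (B.dualSubmodule L) := by
  obtain ⟨n, b, rfl⟩ := exists_basis_span_eq_of_isLattice (F := F) L
  have := b.finiteDimensional_of_finite
  rw [dualSubmodule_span_of_basis B hB]
  exact ⟨fg_span (Set.finite_range _), by rw [span_span_of_tower, Module.Basis.span_eq]⟩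

theorem dualSubmodule_dualSubmodule_of_isLattice (hB : B.Nondegenerate) (hsymm : B.IsSymm)
    (L : Submodule R E) [IsLattice F L] : B.dualSubmodule (B.dualSubmodule L) = L := by
  obtain ⟨n, b, rfl⟩ := exists_basis_span_eq_of_isLattice (F := F) L
  exact dualSubmodule_dualSubmodule_of_basis B hB hsymm b

end FractionField

section DualLat

variable {B : V →ₗ[ℚ] V →ₗ[ℚ] ℚ} {L M : Submodule ℤ V}

theorem dualLat_eq_dualSubmodule (hL : span ℚ (L : Set V) = ⊤) :
    dualLat B L = dualSubmodule B L := by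
  ext x
  have hx : x ∈ span ℚ (L : Set V) := hL ▸ mem_top
  refine (and_iff_right hx).trans (forall₂_congr fun v _ => ?_)
  simp [mem_one, eq_comm]

theorem isLattice_dualLat (hB : Nondegenerate B) (L : Submodule ℤ V) [IsLattice ℚ L] :
    IsLattice ℚ (dualLat B L) := by
  rw [dualLat_eq_dualSubmodule IsLattice.span_eq_top]
  exact isLattice_dualSubmodule hB L

theorem dualLat_dualLat (hB : Nondegenerate B) (hsymm : IsSymm B)
    (L : Submodule ℤ V) [IsLattice ℚ L] : dualLat B (dualLat B L) = L := by
  have := isLattice_dualLat hB L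
  rw [dualLat_eq_dualSubmodule IsLattice.span_eq_top,
    dualLat_eq_dualSubmodule IsLattice.span_eq_top,
    dualSubmodule_dualSubmodule_of_isLattice hB hsymm]

theorem dualLat_anti (hLM : L ≤ M) (hL : span ℚ (L : Set V) = ⊤) : dualLat B M ≤ dualLat B L :=
  fun _ hx => ⟨hL ▸ mem_top, fun v hv => hx.2 v (hLM hv)⟩

/-- Evenness of the form `B` on `L`. Integrality is left out of the notion because it follows when
`B` is symmetric. -/
def IsEvenOn (B : V →ₗ[ℚ] V →ₗ[ℚ] ℚ) (L : Submodule ℤ V) : Prop :=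
  ∀ v ∈ L, ∃ n : ℤ, B v v = 2 * (n : ℚ)

theorem le_dualLat_of_isEvenOn (hsymm : IsSymm B) (heven : IsEvenOn B L) : L ≤ dualLat B L := by
  refine fun v hv => ⟨subset_span hv, fun w hw => ?_⟩
  obtain ⟨a, ha⟩ := heven v hv
  obtain ⟨b, hb⟩ := heven w hw
  obtain ⟨c, hc⟩ := heven (v + w) (L.add_mem hv hw)
  have polarization : B (v + w) (v + w) = B v v + 2 * B v w + B w w := by
    simp only [map_add, LinearMap.add_apply, hsymm.eq w v]
    ring
  exact ⟨c - a - b, by push_cast; linarith⟩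

end DualLat

section ProdForm

variable {B₁ : V →ₗ[ℚ] V →ₗ[ℚ] ℚ} {B₂ : W →ₗ[ℚ] W →ₗ[ℚ] ℚ}

theorem prodForm_apply (z z' : V × W) :
    prodForm B₁ B₂ z z' = B₁ z.1 z'.1 + B₂ z.2 z'.2 := rfl

theorem isSymm_prodForm (h₁ : IsSymm B₁) (h₂ : IsSymm B₂) : IsSymm (prodForm B₁ B₂) :=
  ⟨fun z z' => congrArg₂ (· + ·) (h₁.eq z.1 z'.1) (h₂.eq z.2 z'.2)⟩

variable {L₁ : Submodule ℤ V} {L₂ : Submodule ℤ W}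

theorem dualLat_prodForm_prod :
    dualLat (prodForm B₁ B₂) (L₁.prod L₂) = (dualLat B₁ L₁).prod (dualLat B₂ L₂) := by
  have hspan := span_prod_eq ℚ L₁.zero_mem L₂.zero_mem
  ext ⟨x, y⟩
  constructor
  · rintro ⟨hxy, hint⟩
    rw [prod_coe, hspan] at hxy
    refine ⟨⟨hxy.1, fun v hv => ?_⟩, ⟨hxy.2, fun w hw => ?_⟩⟩
    · simpa [prodForm_apply] using hint (v, 0) ⟨hv, L₂.zero_mem⟩
    · simpa [prodForm_apply] using hint (0, w) ⟨L₁.zero_mem, hw⟩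
  · rintro ⟨⟨hx, hx_int⟩, ⟨hy, hy_int⟩⟩
    refine ⟨?_, fun z hz => ?_⟩
    · rw [prod_coe, hspan]
      exact ⟨hx, hy⟩
    · obtain ⟨m, hm⟩ := hx_int z.1 hz.1
      obtain ⟨n, hn⟩ := hy_int z.2 hz.2
      exact ⟨m + n, by rw [prodForm_apply, hm, hn, Int.cast_add]⟩

theorem dualLat_prodForm_eq_self [IsLattice ℚ L₁] [IsLattice ℚ L₂] {Γ : Submodule ℤ (V × W)}
    (hB₂ : Nondegenerate B₂) (hsymm₂ : IsSymm B₂)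
    (hint : Γ ≤ dualLat (prodForm B₁ B₂) Γ) (hle : L₁.prod L₂ ≤ Γ)
    (hfst : dualLat B₁ L₁ ≤ Γ.map (LinearMap.fst ℤ V W))
    (hsnd : dualLat B₂ L₂ ≤ Γ.map (LinearMap.snd ℤ V W)) :
    dualLat (prodForm B₁ B₂) Γ = Γ := by
  refine le_antisymm ?_ hint
  rintro ⟨a, b⟩ hab
  have ha : a ∈ dualLat B₁ L₁ := by
    have h := dualLat_anti hle (isLattice_prod L₁ L₂).span_eq_top hab
    rw [dualLat_prodForm_prod] at h
    exact h.1
  obtain ⟨⟨_, b'⟩, hab', rfl⟩ := hfst ha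
  have hb : b - b' ∈ L₂ := by
    rw [← dualLat_dualLat hB₂ hsymm₂ L₂]
    refine ⟨(isLattice_dualLat hB₂ L₂).span_eq_top ▸ mem_top, fun w hw => ?_⟩
    obtain ⟨⟨v, _⟩, hvw, rfl⟩ := hsnd hw
    simpa [prodForm_apply] using (sub_mem hab (hint hab')).2 _ hvw
  have hdiff : (0, b - b') ∈ Γ := hle ⟨L₁.zero_mem, hb⟩
  simpa using add_mem hab' hdiff

end ProdForm

section Glued

theorem exists_discMk_eq {B : V →ₗ[ℚ] V →ₗ[ℚ] ℚ} {L : Submodule ℤ V} (c : discGrp B L) :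
    ∃ (x : V) (hx : x ∈ dualLat B L), discMk B L x hx = c := by
  obtain ⟨⟨x, hx⟩, h⟩ := mkQ_surjective _ c
  exact ⟨x, hx, h⟩

theorem discMk_eq_zero_iff {B : V →ₗ[ℚ] V →ₗ[ℚ] ℚ} {L : Submodule ℤ V} {x : V}
    (hx : x ∈ dualLat B L) : discMk B L x hx = 0 ↔ x ∈ L :=
  Quotient.mk_eq_zero _

variable {B₁ : V →ₗ[ℚ] V →ₗ[ℚ] ℚ} {B₂ : W →ₗ[ℚ] W →ₗ[ℚ] ℚ} {L₁ : Submodule ℤ V}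
  {L₂ : Submodule ℤ W} (γ : discGrp B₁ L₁ ≃+ discGrp B₂ L₂)

theorem prod_le_glued (h₁ : L₁ ≤ dualLat B₁ L₁) (h₂ : L₂ ≤ dualLat B₂ L₂) :
    L₁.prod L₂ ≤ glued B₁ B₂ L₁ L₂ γ := by
  rintro z ⟨hz₁, hz₂⟩
  refine ⟨h₁ hz₁, h₂ hz₂, ?_⟩
  rw [(discMk_eq_zero_iff _).mpr hz₁, (discMk_eq_zero_iff _).mpr hz₂, map_zero]

theorem map_fst_glued : (glued B₁ B₂ L₁ L₂ γ).map (LinearMap.fst ℤ V W) = dualLat B₁ L₁ := by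
  ext x
  constructor
  · rintro ⟨z, ⟨hz, -⟩, rfl⟩
    exact hz
  · intro hx
    obtain ⟨y, hy, hγ⟩ := exists_discMk_eq (γ (discMk B₁ L₁ x hx))
    exact ⟨(x, y), ⟨hx, hy, hγ.symm⟩, rfl⟩

theorem map_snd_glued : (glued B₁ B₂ L₁ L₂ γ).map (LinearMap.snd ℤ V W) = dualLat B₂ L₂ := by
  ext y
  constructor
  · rintro ⟨z, ⟨-, hz, -⟩, rfl⟩
    exact hz
  · intro hy
    obtain ⟨x, hx, hγ⟩ := exists_discMk_eq (γ.symm (discMk B₂ L₂ y hy))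
    exact ⟨(x, y), ⟨hx, hy, by rw [hγ, γ.apply_symm_apply]⟩, rfl⟩

theorem glued_le_prod_dualLat :
    glued B₁ B₂ L₁ L₂ γ ≤ (dualLat B₁ L₁).prod (dualLat B₂ L₂) :=
  (le_prod_iff _ _ _).mpr ⟨(map_fst_glued γ).le, (map_snd_glued γ).le⟩

end Glued

theorem statement1
    (B₁ : V →ₗ[ℚ] V →ₗ[ℚ] ℚ) (B₂ : W →ₗ[ℚ] W →ₗ[ℚ] ℚ)
    (hsymm₁ : ∀ x y, B₁ x y = B₁ y x) (hsymm₂ : ∀ x y, B₂ x y = B₂ y x)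
    (hnd₁ : ∀ x : V, (∀ y : V, B₁ x y = 0) → x = 0)
    (hnd₂ : ∀ x : W, (∀ y : W, B₂ x y = 0) → x = 0)
    (L₁ : Submodule ℤ V) (L₂ : Submodule ℤ W)
    (hfg₁ : L₁.FG) (hfg₂ : L₂.FG)
    (hfull₁ : Submodule.span ℚ (L₁ : Set V) = ⊤)
    (hfull₂ : Submodule.span ℚ (L₂ : Set W) = ⊤)
    (hint₁ : ∀ v ∈ L₁, ∀ w ∈ L₁, ∃ n : ℤ, B₁ v w = (n : ℚ))
    (hint₂ : ∀ v ∈ L₂, ∀ w ∈ L₂, ∃ n : ℤ, B₂ v w = (n : ℚ))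
    (heven₁ : ∀ v ∈ L₁, ∃ n : ℤ, B₁ v v = 2 * (n : ℚ))
    (heven₂ : ∀ v ∈ L₂, ∃ n : ℤ, B₂ v v = 2 * (n : ℚ))
    (γ : discGrp B₁ L₁ ≃+ discGrp B₂ L₂)
    (hγ : ∀ (x : V) (hx : x ∈ dualLat B₁ L₁) (y : W) (hy : y ∈ dualLat B₂ L₂),
      γ (discMk B₁ L₁ x hx) = discMk B₂ L₂ y hy →
        ∃ n : ℤ, B₁ x x + B₂ y y = 2 * (n : ℚ)) :
    -- Γ is a (full, finitely generated) lattice in V × W …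
    Submodule.span ℚ ((glued B₁ B₂ L₁ L₂ γ : Submodule ℤ (V × W)) : Set (V × W)) = ⊤ ∧
    (glued B₁ B₂ L₁ L₂ γ).FG ∧
    -- … which is even, …
    (∀ z ∈ glued B₁ B₂ L₁ L₂ γ, ∃ n : ℤ, prodForm B₁ B₂ z z = 2 * (n : ℚ)) ∧
    -- … unimodular (self-dual), …
    dualLat (prodForm B₁ B₂) (glued B₁ B₂ L₁ L₂ γ) = glued B₁ B₂ L₁ L₂ γ ∧
    -- … and contains Λ ⊕ K.
    (∀ v ∈ L₁, ∀ w ∈ L₂, (v, w) ∈ glued B₁ B₂ L₁ L₂ γ) := by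
  have symm₁ : IsSymm B₁ := ⟨hsymm₁⟩
  have symm₂ : IsSymm B₂ := ⟨hsymm₂⟩
  have nondeg₁ : Nondegenerate B₁ := symm₁.isRefl.nondegenerate_iff_separatingLeft.mpr hnd₁
  have nondeg₂ : Nondegenerate B₂ := symm₂.isRefl.nondegenerate_iff_separatingLeft.mpr hnd₂
  have : IsLattice ℚ L₁ := ⟨hfg₁, hfull₁⟩
  have : IsLattice ℚ L₂ := ⟨hfg₂, hfull₂⟩
  have hle : L₁.prod L₂ ≤ glued B₁ B₂ L₁ L₂ γ :=
    prod_le_glued γ (le_dualLat_of_isEvenOn symm₁ heven₁) (le_dualLat_of_isEvenOn symm₂ heven₂)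
  have lattice : IsLattice ℚ (glued B₁ B₂ L₁ L₂ γ) := by
    have := isLattice_prod (A := ℚ) L₁ L₂
    have := isLattice_dualLat nondeg₁ L₁
    have := isLattice_dualLat nondeg₂ L₂
    have := isLattice_prod (A := ℚ) (dualLat B₁ L₁) (dualLat B₂ L₂)
    exact isLattice_of_le_of_le hle (glued_le_prod_dualLat γ)
  have even : IsEvenOn (prodForm B₁ B₂) (glued B₁ B₂ L₁ L₂ γ) :=
    fun z ⟨hz₁, hz₂, hz⟩ => hγ z.1 hz₁ z.2 hz₂ hz
  have unimodular : dualLat (prodForm B₁ B₂) (glued B₁ B₂ L₁ L₂ γ) = glued B₁ B₂ L₁ L₂ γ :=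
    dualLat_prodForm_eq_self nondeg₂ symm₂
      (le_dualLat_of_isEvenOn (isSymm_prodForm symm₁ symm₂) even) hle
      (map_fst_glued γ).ge (map_snd_glued γ).ge
  exact ⟨lattice.span_eq_top, lattice.fg, even, unimodular, fun _ hv _ hw => hle ⟨hv, hw⟩⟩

end
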